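/- Let w be a permutation of {1,…,n} and δ ∈ GPDs(w). For all i < j, the pipes labelled i and j cross at an odd number of tiles of δ if w(i) > w(j), and at an even number of tiles if w(i) < w(j). Consequently the number of cross tiles of δ is at least ℓ(w) (the number of inversions of w), with equality if and only if no two pipes of δ cross at more than one tile. -/

import Mathlib

open scoped Classical

namespace GPDpaper

/-- Raw data of a pipe-filling of the `n × n` grid: `d.1 i j` is the (optional) pipe label on
the vertical edge at row `i`, West of column `j` (so `d.1 i 0` is on the West boundary and
`d.1 i (Fin.last n)` on the East boundary); `d.2 i j` is the label on the horizontal edge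
North of row `i` in column `j` (so `d.2 0 j` is on the North boundary and
`d.2 (Fin.last n) j` on the South boundary).  Rows are numbered from the top. -/
abbrev Pipes (n : ℕ) :=
  (Fin n → Fin (n+1) → Option (Fin n)) × (Fin (n+1) → Fin n → Option (Fin n))

variable {n : ℕ}

/-- Label on the West edge of square `(i,j)`. -/
def We (d : Pipes n) (i j : Fin n) : Option (Fin n) := d.1 i j.castSucc
/-- Label on the East edge of square `(i,j)`. -/
def Ea (d : Pipes n) (i j : Fin n) : Option (Fin n) := d.1 i j.succ
/-- Label on the North edge of square `(i,j)`. -/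
def No (d : Pipes n) (i j : Fin n) : Option (Fin n) := d.2 i.castSucc j
/-- Label on the South edge of square `(i,j)`. -/
def So (d : Pipes n) (i j : Fin n) : Option (Fin n) := d.2 i.succ j

/-- The local condition making `d` a generic pipe dream: at each square, the pair of labels
leaving through the East and North edges is either `(W,S)` (cross/horizontal/vertical/blank
tile) or `(S,W)` (bump/elbow/blank tile); moreover two edges of the same square never carry
the same pipe label. -/
def IsValid (d : Pipes n) : Prop :=
  ∀ i j : Fin n,
    ((Ea d i j, No d i j) = (We d i j, So d i j) ∨
     (Ea d i j, No d i j) = (So d i j, We d i j)) ∧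
    (We d i j = So d i j → We d i j = none)

/-- The seven generic pipe dream tiles. -/
inductive Tile where
  | cross | bump | nw | se | horiz | vert | blank
deriving DecidableEq

/-- The tile of a pipe-filling at square `(i,j)`. -/
def tile (d : Pipes n) (i j : Fin n) : Tile :=
  match We d i j, So d i j with
  | some a, some _ => if Ea d i j = some a then .cross else .bump
  | some _, none => if No d i j = none then .horiz else .nw
  | none, some _ => if No d i j = none then .se else .vert
  | none, none => .blank

/-- `d` is a generic pipe dream for the permutation `w`: it is locally valid, the pipe
entering the West boundary in row `i` is labelled `i`, no pipes meet the East and South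
boundaries, and the pipe exiting the North boundary in column `j` is labelled `w⁻¹(j)`. -/
def IsGPDof (w : Equiv.Perm (Fin n)) (d : Pipes n) : Prop :=
  IsValid d ∧
  (∀ i : Fin n, d.1 i 0 = some i) ∧
  (∀ i : Fin n, d.1 i (Fin.last n) = none) ∧
  (∀ j : Fin n, d.2 (Fin.last n) j = none) ∧
  (∀ j : Fin n, d.2 0 j = some (w.symm j))

/-- Number of tiles of `d` of a given type. -/
noncomputable def tileCount (d : Pipes n) (t : Tile) : ℕ :=
  (Finset.univ.filter (fun p : Fin n × Fin n => tile d p.1 p.2 = t)).card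

/-- The pipes labelled `p` and `q` cross at the tile `(i,j)`. -/
def CrossesAt (d : Pipes n) (p q : Fin n) (i j : Fin n) : Prop :=
  tile d i j = .cross ∧
  ((We d i j = some p ∧ So d i j = some q) ∨ (We d i j = some q ∧ So d i j = some p))

/-- The number of tiles at which the pipes labelled `p` and `q` cross. -/
noncomputable def crossCount (d : Pipes n) (p q : Fin n) : ℕ :=
  (Finset.univ.filter (fun ij : Fin n × Fin n => CrossesAt d p q ij.1 ij.2)).card

/-- No two pipes of `d` cross each other at more than one tile. -/
def NoDoubleCross (d : Pipes n) : Prop := ∀ p q : Fin n, crossCount d p q ≤ 1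

/-- Number of inversions (Coxeter length) of a permutation. -/
def invCount (w : Equiv.Perm (Fin n)) : ℕ :=
  (Finset.univ.filter (fun p : Fin n × Fin n => p.1 < p.2 ∧ w p.2 < w p.1)).card

/-- Classic pipe dream (in 1-indexed terms: crosses and bumps for `i+j ≤ n`, NW-elbows on the
antidiagonal `i+j = n+1`, blanks below, and no two pipes crossing twice). -/
def IsClassic (d : Pipes n) : Prop :=
  (∀ i j : Fin n, (i : ℕ) + (j : ℕ) + 2 ≤ n → tile d i j = .cross ∨ tile d i j = .bump) ∧
  (∀ i j : Fin n, (i : ℕ) + (j : ℕ) + 2 = n + 1 → tile d i j = .nw) ∧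
  (∀ i j : Fin n, (i : ℕ) + (j : ℕ) + 2 > n + 1 → tile d i j = .blank) ∧
  NoDoubleCross d

/-- Bumpless-reduced: no bump tiles and no two pipes crossing twice. -/
def IsBumplessReduced (d : Pipes n) : Prop :=
  (∀ i j : Fin n, tile d i j ≠ .bump) ∧ NoDoubleCross d

/-!
The edges carrying a fixed pipe form a conserved flow on the grid, so the pipe has a potential `F`
on the vertices, changing by one across the pipe. For two pipes `p` and `q`, summing over all
squares the wedge product of the two flows counts the crossings of `p` and `q` with a sign telling
which of them runs horizontally; bumps and elbows contribute nothing. By Green's theorem this sum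
is a boundary term: it is the value of the potential of `p` at the North end of `q` minus its value
at the West end of `q`, that is `[w p < w q] - [p < q]`. Modulo two this is the parity claim.

Hence `ℓ(w)` is the sum over pairs `p < q` of the remainder modulo two of the number of crossings
of `p` and `q`, while the number of cross tiles is the sum of the numbers themselves.
-/

section Current

variable {R : Type*} {m : ℕ} {v v' : Fin m → Fin (n + 1) → R} {h h' : Fin (m + 1) → Fin n → R}

/-- A flow through the edges of an `m × n` grid, `v` through the vertical edges and `h` through the
horizontal ones, indexed as in `Pipes`, which is conserved at each square: what leaves through the
North and East edges is what enters through the West and South edges. -/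
def IsCurrent [Add R] (v : Fin m → Fin (n + 1) → R) (h : Fin (m + 1) → Fin n → R) : Prop :=
  ∀ i j, h i.castSucc j + v i j.succ = v i j.castSucc + h i.succ j

/-- The function on the vertices of the grid, vanishing at the North-West corner, whose increments
are the values of the current `(v, h)` on the edges. It is computed by going down the West boundary
and then East; for a current any other path gives the same value. -/
def potential [AddMonoid R] (v : Fin m → Fin (n + 1) → R) (h : Fin (m + 1) → Fin n → R)
    (i : Fin (m + 1)) (j : Fin (n + 1)) : R :=
  Fin.partialSum (fun k => v k 0) i + Fin.partialSum (h i) j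

lemma potential_succ_right [AddMonoid R] (v : Fin m → Fin (n + 1) → R)
    (h : Fin (m + 1) → Fin n → R) (i : Fin (m + 1)) (j : Fin n) :
    potential v h i j.succ = potential v h i j.castSucc + h i j := by
  simp only [potential, Fin.partialSum_succ, add_assoc]

lemma IsCurrent.potential_succ_left [AddCommMonoid R] (hvh : IsCurrent v h) (i : Fin m)
    (j : Fin (n + 1)) : potential v h i.succ j = potential v h i.castSucc j + v i j := by
  induction j using Fin.induction with
  | zero => simp only [potential, Fin.partialSum_succ, Fin.partialSum_zero, add_zero]
  | succ j ih =>
    rw [potential_succ_right, potential_succ_right, ih, add_assoc, add_assoc, hvh]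

lemma sum_succ_sub_castSucc {G : Type*} [AddCommGroup G] (f : Fin (n + 1) → G) :
    ∑ i : Fin n, (f i.succ - f i.castSucc) = f (Fin.last n) - f 0 := by
  rw [Finset.sum_sub_distrib, sub_eq_sub_iff_add_eq_add, add_comm, ← Fin.sum_univ_succ,
    Fin.sum_univ_castSucc, add_comm]

lemma IsCurrent.wedge_eq [Ring R] (hvh : IsCurrent v h) (hvh' : IsCurrent v' h') (i : Fin m)
    (j : Fin n) :
    h i.castSucc j * v' i j.succ - v i j.castSucc * h' i.succ j =
      (potential v h i.castSucc j.succ * v' i j.succ -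
        potential v h i.castSucc j.castSucc * v' i j.castSucc) -
      (potential v h i.succ j.castSucc * h' i.succ j -
        potential v h i.castSucc j.castSucc * h' i.castSucc j) := by
  have conserved := congrArg (potential v h i.castSucc j.castSucc * ·) (hvh' i j)
  simp only [mul_add] at conserved
  rw [potential_succ_right, hvh.potential_succ_left, add_mul, add_mul]
  grind

/-- Discrete Green's theorem. With `F` the potential of `(v, h)` and `ω = (v', h')`, the left side
is the sum of `dF ∧ ω = d(F ω)` over the squares. -/
lemma IsCurrent.sum_wedge_eq [Ring R] (hvh : IsCurrent v h) (hvh' : IsCurrent v' h') :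
    ∑ i, ∑ j, (h i.castSucc j * v' i j.succ - v i j.castSucc * h' i.succ j) =
      ∑ i, (potential v h i.castSucc (Fin.last n) * v' i (Fin.last n) -
        potential v h i.castSucc 0 * v' i 0) -
      ∑ j, (potential v h (Fin.last m) j.castSucc * h' (Fin.last m) j -
        potential v h 0 j.castSucc * h' 0 j) := by
  have rows (i : Fin m) := sum_succ_sub_castSucc fun j => potential v h i.castSucc j * v' i j
  have columns (j : Fin n) :=
    sum_succ_sub_castSucc fun i => potential v h i j.castSucc * h' i j
  calc
    _ = ∑ i : Fin m, ∑ j : Fin n, (potential v h i.castSucc j.succ * v' i j.succ -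
          potential v h i.castSucc j.castSucc * v' i j.castSucc) -
        ∑ j : Fin n, ∑ i : Fin m, (potential v h i.succ j.castSucc * h' i.succ j -
          potential v h i.castSucc j.castSucc * h' i.castSucc j) := by
      rw [Finset.sum_comm (s := (Finset.univ : Finset (Fin n)))]
      simp only [hvh.wedge_eq hvh', Finset.sum_sub_distrib]
    _ = _ := by simp only [rows, columns]

lemma partialSum_single {M : Type*} [AddMonoid M] (a : Fin n) (x : M) (j : Fin (n + 1)) :
    Fin.partialSum (Pi.single a x) j = if a.castSucc < j then x else 0 := by
  induction j using Fin.induction with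
  | zero => simp
  | succ j ih =>
    rw [Fin.partialSum_succ, ih, Pi.single_apply]
    grind

end Current

/-- The amount of the pipe labelled `p` carried by an edge with label `e`; integer-valued so that
the two directions of a crossing can be counted with opposite signs. -/
noncomputable def strand (p : Fin n) (e : Option (Fin n)) : ℤ := if e = some p then 1 else 0

@[simp]
lemma strand_none (p : Fin n) : strand p none = 0 :=
  if_neg nofun

@[simp]
lemma strand_some (p q : Fin n) : strand p (some q) = if q = p then 1 else 0 := by
  simp only [strand, Option.some.injEq]

/-- At the cross tile `(i,j)` the pipe `p` runs West–East and the pipe `q` runs South–North. -/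
def CrossesOver (d : Pipes n) (p q i j : Fin n) : Prop :=
  tile d i j = .cross ∧ We d i j = some p ∧ So d i j = some q

/-- The number of tiles at which the pipe `p`, running West–East, crosses the pipe `q`, running
South–North. -/
noncomputable def overCount (d : Pipes n) (p q : Fin n) : ℕ :=
  (Finset.univ.filter fun ij : Fin n × Fin n => CrossesOver d p q ij.1 ij.2).card

variable {d : Pipes n} {w : Equiv.Perm (Fin n)} {p q i j : Fin n}

lemma tile_eq_cross_iff :
    tile d i j = .cross ↔ ∃ a b, We d i j = some a ∧ So d i j = some b ∧ Ea d i j = some a := by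
  grind [tile]

lemma IsValid.ne_of_we_so (hd : IsValid d) (hW : We d i j = some p) (hS : So d i j = some q) :
    p ≠ q := by
  rintro rfl
  simpa [hW] using (hd i j).2 (hW.trans hS.symm)

lemma IsValid.no_eq_so_of_cross (hd : IsValid d) (hc : tile d i j = .cross) :
    No d i j = So d i j := by
  obtain ⟨a, b, hW, -, hE⟩ := tile_eq_cross_iff.1 hc
  rcases (hd i j).1 with h | h <;> obtain ⟨hE', hN⟩ := Prod.mk.inj h
  · exact hN
  · exact absurd rfl (hd.ne_of_we_so hW (hE'.symm.trans hE))

lemma IsValid.isCurrent_strand (hd : IsValid d) (p : Fin n) :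
    IsCurrent (fun i j => strand p (d.1 i j)) (fun i j => strand p (d.2 i j)) := by
  intro i j
  rcases (hd i j).1 with h | h <;> obtain ⟨hE, hN⟩ := Prod.mk.inj h
  · exact (add_comm _ _).trans (congrArg₂ (strand p · + strand p ·) hE hN)
  · exact congrArg₂ (strand p · + strand p ·) hN hE

lemma IsValid.strand_wedge_eq (hd : IsValid d) (p q i j : Fin n) :
    strand p (No d i j) * strand q (Ea d i j) - strand p (We d i j) * strand q (So d i j) =
      (if CrossesOver d q p i j then 1 else 0) - (if CrossesOver d p q i j then 1 else 0) := by
  by_cases hc : tile d i j = .cross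
  · obtain ⟨a, b, hW, hS, hE⟩ := tile_eq_cross_iff.1 hc
    simp only [CrossesOver, strand_some, Option.some.injEq, hd.no_eq_so_of_cross hc, hc, hW, hS, hE]
    grind
  · simp only [CrossesOver, hc, false_and, if_false, sub_zero]
    rcases (hd i j).1 with h | h <;> obtain ⟨hE, hN⟩ := Prod.mk.inj h
    · have vacant : We d i j = none ∨ So d i j = none := by
        by_contra! occupied
        obtain ⟨a, hW⟩ := Option.ne_none_iff_exists'.1 occupied.1
        obtain ⟨b, hS⟩ := Option.ne_none_iff_exists'.1 occupied.2
        exact hc (tile_eq_cross_iff.2 ⟨a, b, hW, hS, hE.trans hW⟩)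
      rcases vacant with hW | hS
      · simp [hE, hW]
      · simp [hN, hS]
    · rw [hE, hN, sub_self]

lemma IsGPDof.potential_zero_left (hd : IsGPDof w d) (p : Fin n) (j : Fin n) :
    potential (fun i j => strand p (d.1 i j)) (fun i j => strand p (d.2 i j)) 0 j.castSucc =
      if w p < j then 1 else 0 := by
  obtain ⟨-, -, -, -, hN⟩ := hd
  have north : (fun j => strand p (d.2 0 j)) = Pi.single (w p) 1 := by
    ext j
    simp [hN, Pi.single_apply, Equiv.symm_apply_eq]
  simp [potential, north, partialSum_single]

lemma IsGPDof.potential_zero_right (hd : IsGPDof w d) (p : Fin n) (i : Fin n) :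
    potential (fun i j => strand p (d.1 i j)) (fun i j => strand p (d.2 i j)) i.castSucc 0 =
      if p < i then 1 else 0 := by
  obtain ⟨-, hW, -⟩ := hd
  have west : (fun i => strand p (d.1 i 0)) = Pi.single p 1 := by
    ext i
    simp [hW, Pi.single_apply]
  simp [potential, west, partialSum_single]

theorem IsGPDof.overCount_sub_overCount (hd : IsGPDof w d) (p q : Fin n) :
    (overCount d q p : ℤ) - overCount d p q =
      (if w p < w q then 1 else 0) - (if p < q then 1 else 0) := by
  have ⟨hv, hW, hE, hS, hN⟩ := hd
  have green := (hv.isCurrent_strand p).sum_wedge_eq (hv.isCurrent_strand q)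
  calc
    (overCount d q p : ℤ) - overCount d p q
      = ∑ i, ∑ j, (strand p (No d i j) * strand q (Ea d i j) -
          strand p (We d i j) * strand q (So d i j)) := by
      simp only [hv.strand_wedge_eq, overCount, Finset.card_filter, Fintype.sum_prod_type,
        Finset.sum_sub_distrib, Nat.cast_sum, Nat.cast_ite, Nat.cast_one, Nat.cast_zero]
    _ = (if w p < w q then 1 else 0) - (if p < q then 1 else 0) := by
      -- The pipe `q` meets the boundary only once on the West side, at row `q`, and once on the
      -- North side, at column `w q`.
      refine green.trans ?_
      simp [hE, hS, hW, hN, hd.potential_zero_left, hd.potential_zero_right,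
        Equiv.symm_apply_eq, neg_add_eq_sub]

lemma crossesAt_iff_crossesOver :
    CrossesAt d p q i j ↔ CrossesOver d p q i j ∨ CrossesOver d q p i j :=
  and_or_left

lemma crossesAt_comm : CrossesAt d p q i j ↔ CrossesAt d q p i j :=
  and_congr_right' or_comm

lemma IsValid.crossCount_eq_add (hd : IsValid d) (p q : Fin n) :
    crossCount d p q = overCount d p q + overCount d q p := by
  unfold crossCount overCount
  rw [← Finset.card_union_of_disjoint, ← Finset.filter_or]
  · exact congrArg Finset.card (Finset.filter_congr fun _ _ => crossesAt_iff_crossesOver)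
  · refine Finset.disjoint_filter.2 fun ij _ hpq hqp => ?_
    exact hd.ne_of_we_so hqp.2.1 hpq.2.2 rfl

theorem IsGPDof.crossCount_mod_two (hd : IsGPDof w d) (hpq : p < q) :
    crossCount d p q % 2 = if w q < w p then 1 else 0 := by
  have signed := hd.overCount_sub_overCount p q
  have ne : w p ≠ w q := w.injective.ne hpq.ne
  rw [hd.1.crossCount_eq_add]
  grind

lemma crossCount_comm (d : Pipes n) (p q : Fin n) : crossCount d p q = crossCount d q p :=
  congrArg Finset.card (Finset.filter_congr fun _ _ => crossesAt_comm)

lemma IsValid.crossCount_self (hd : IsValid d) (p : Fin n) : crossCount d p p = 0 := by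
  refine Finset.card_eq_zero.2 (Finset.filter_eq_empty_iff.2 fun ij _ hc => ?_)
  rcases hc.2 with ⟨hW, hS⟩ | ⟨hW, hS⟩ <;> exact hd.ne_of_we_so hW hS rfl

lemma IsValid.noDoubleCross_iff (hd : IsValid d) :
    NoDoubleCross d ↔ ∀ p q : Fin n, p < q → crossCount d p q ≤ 1 := by
  refine ⟨fun h p q _ => h p q, fun h p q => ?_⟩
  rcases lt_trichotomy p q with hpq | rfl | hqp
  · exact h p q hpq
  · exact (hd.crossCount_self p).trans_le zero_le_one
  · exact (crossCount_comm d p q).trans_le (h q p hqp)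

lemma IsValid.exists_lt_crossesAt (hd : IsValid d) (hc : tile d i j = .cross) :
    ∃ p q, p < q ∧ CrossesAt d p q i j := by
  obtain ⟨a, b, hW, hS, -⟩ := tile_eq_cross_iff.1 hc
  rcases (hd.ne_of_we_so hW hS).lt_or_gt with hab | hba
  · exact ⟨a, b, hab, hc, .inl ⟨hW, hS⟩⟩
  · exact ⟨b, a, hba, hc, .inr ⟨hW, hS⟩⟩

lemma CrossesAt.eq_and_eq {p' q' : Fin n} (hc : CrossesAt d p q i j) (hc' : CrossesAt d p' q' i j)
    (hpq : p < q) (hpq' : p' < q') : p = p' ∧ q = q' := by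
  grind [CrossesAt]

lemma IsValid.tileCount_cross_eq_sum (hd : IsValid d) :
    tileCount d .cross =
      ∑ pq : Fin n × Fin n with pq.1 < pq.2, crossCount d pq.1 pq.2 := by
  unfold tileCount crossCount
  rw [← Finset.card_biUnion]
  · congr 1
    ext ij
    simp only [Finset.mem_filter, Finset.mem_univ, true_and, Finset.mem_biUnion, Prod.exists]
    exact ⟨hd.exists_lt_crossesAt, fun ⟨_, _, _, hc⟩ => hc.1⟩
  · intro pq hpq pq' hpq' hne
    refine Finset.disjoint_filter.2 fun ij _ hc hc' => hne (Prod.ext_iff.2 ?_)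
    exact hc.eq_and_eq hc' (Finset.mem_filter.1 hpq).2 (Finset.mem_filter.1 hpq').2

lemma IsGPDof.invCount_eq_sum (hd : IsGPDof w d) :
    invCount w = ∑ pq : Fin n × Fin n with pq.1 < pq.2, crossCount d pq.1 pq.2 % 2 := by
  rw [invCount, ← Finset.filter_filter, Finset.card_filter]
  exact Finset.sum_congr rfl fun pq hpq =>
    (hd.crossCount_mod_two (Finset.mem_filter.1 hpq).2).symm

lemma IsGPDof.tileCount_cross_eq_invCount_iff (hd : IsGPDof w d) :
    tileCount d .cross = invCount w ↔ NoDoubleCross d := by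
  rw [hd.1.tileCount_cross_eq_sum, hd.invCount_eq_sum, eq_comm,
    Finset.sum_eq_sum_iff_of_le fun _ _ => Nat.mod_le _ _, hd.1.noDoubleCross_iff]
  simp only [Finset.mem_filter, Finset.mem_univ, true_and, Nat.mod_eq_iff_lt two_ne_zero,
    Order.lt_two_iff, Prod.forall]

lemma IsGPDof.invCount_le_tileCount_cross (hd : IsGPDof w d) :
    invCount w ≤ tileCount d .cross := by
  rw [hd.1.tileCount_cross_eq_sum, hd.invCount_eq_sum]
  exact Finset.sum_le_sum fun _ _ => Nat.mod_le _ _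

theorem statement7 {n : ℕ} (hn : 1 ≤ n) (w : Equiv.Perm (Fin n)) (d : Pipes n)
    (hd : IsGPDof w d) :
    (∀ p q : Fin n, p < q →
      (w q < w p → Odd (crossCount d p q)) ∧ (w p < w q → Even (crossCount d p q))) ∧
    invCount w ≤ tileCount d .cross ∧
    (tileCount d .cross = invCount w ↔ NoDoubleCross d) := by
  refine ⟨fun p q hpq => ⟨fun hw => ?_, fun hw => ?_⟩, hd.invCount_le_tileCount_cross,
    hd.tileCount_cross_eq_invCount_iff⟩
  · rw [Nat.odd_iff, hd.crossCount_mod_two hpq, if_pos hw]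
  · rw [Nat.even_iff, hd.crossCount_mod_two hpq, if_neg hw.not_gt]

end GPDpaper
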